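/- arXiv:2503.13132 — 2 statements merged into one kernel-verified Lean document; each statement's English description precedes it below -/
import Mathlib

section
/- Assume conditions (a) and (b), let Q_{1,k}^{(d)} := Σ_{1≤l≠k'≤k} ⟨X_l^{(d)}, X_{k'}^{(d)}⟩, and let N ∈ ℕ with N ≥ 1 and λ > 0. Then P( max_{1≤k≤N} |Q_{1,k}^{(d)}| ≥ λ ) ≤ λ^{-2} E(Q_{1,N}^{(d)})² ≤ 2 λ^{-2} N(N−1) max_{1≤j≤d} E(X_{1,j}^{(d)})². -/
open MeasureTheory
open scoped RealInnerProductSpace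

namespace QMax

set_option linter.unusedSectionVars false

open ProbabilityTheory

variable {Ω : Type*} [mΩ : MeasurableSpace Ω]

/-- partial sums of coordinates -/
def S {d : ℕ} (x : ℕ → Fin d → Ω → ℝ) (k : ℕ) (j : Fin d) (ω : Ω) : ℝ :=
  ∑ i ∈ Finset.Icc 1 k, x i j ω

/-- the martingale difference (halved) -/
def D {d : ℕ} (x : ℕ → Fin d → Ω → ℝ) (k : ℕ) (ω : Ω) : ℝ :=
  ∑ j, S x k j ω * x (k + 1) j ω

/-- the martingale -/
def Q {d : ℕ} (x : ℕ → Fin d → Ω → ℝ) : ℕ → Ω → ℝ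
  | 0 => fun _ => 0
  | k + 1 => fun ω => Q x k ω + 2 * D x k ω

/-- the structural hypotheses on the coordinates -/
structure Hyp (P : Measure Ω) {d : ℕ} (F : Filtration ℕ mΩ) (x : ℕ → Fin d → Ω → ℝ)
    (v : Fin d → ℝ) : Prop where
  adp : ∀ i j, Measurable[F i] (x i j)
  l2 : ∀ i j, MemLp (x i j) 2 P
  ind1 : ∀ k (f : Ω → ℝ), Measurable[F k] f → ∀ j, IndepFun f (x (k + 1) j) P
  ind2 : ∀ k (f : Ω → ℝ), Measurable[F k] f → ∀ j l,
    IndepFun f (fun ω => x (k + 1) j ω * x (k + 1) l ω) P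
  mean : ∀ i j, ∫ ω, x i j ω ∂P = 0
  cov : ∀ i j l, ∫ ω, x i j ω * x i l ω ∂P = if j = l then v j else 0

variable {P : Measure Ω} [IsProbabilityMeasure P] {d : ℕ} {F : Filtration ℕ mΩ}
  {x : ℕ → Fin d → Ω → ℝ} {v : Fin d → ℝ}

lemma S_succ (k : ℕ) (j : Fin d) (ω : Ω) :
    S x (k + 1) j ω = S x k j ω + x (k + 1) j ω := by
  unfold S
  rw [Finset.sum_Icc_succ_top (by omega)]

lemma S_zero (j : Fin d) (ω : Ω) : S x 0 j ω = 0 := by simp [S]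

lemma S_meas (h : Hyp P F x v) (k : ℕ) (j : Fin d) : Measurable[F k] (S x k j) := by
  unfold S
  refine Finset.measurable_fun_sum _ fun i hi => ?_
  exact (h.adp i j).mono (F.mono (Finset.mem_Icc.mp hi).2) le_rfl

lemma D_meas (h : Hyp P F x v) (k : ℕ) : Measurable[F (k + 1)] (D x k) := by
  unfold D
  refine Finset.measurable_fun_sum _ fun j _ => ?_
  exact Measurable.mul ((S_meas h k j).mono (F.mono (Nat.le_succ k)) le_rfl) (h.adp (k + 1) j)

lemma Q_meas (h : Hyp P F x v) (k : ℕ) : Measurable[F k] (Q x k) := by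
  induction k with
  | zero => exact measurable_const
  | succ k ih =>
    exact Measurable.add (ih.mono (F.mono (Nat.le_succ k)) le_rfl)
      (Measurable.const_mul (D_meas h k) 2)

lemma S_l2 (h : Hyp P F x v) (k : ℕ) (j : Fin d) : MemLp (S x k j) 2 P := by
  unfold S
  exact memLp_finsetSum _ fun i _ => h.l2 i j

lemma prod_l2 (h : Hyp P F x v) (k : ℕ) (f : Ω → ℝ) (hf : Measurable[F k] f)
    (hf2 : MemLp f 2 P) (j : Fin d) : MemLp (fun ω => f ω * x (k + 1) j ω) 2 P := by
  have m1 := (hf.mono (F.le k) le_rfl)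
  have m2 := ((h.adp (k + 1) j).mono (F.le _) le_rfl)
  refine (memLp_two_iff_integrable_sq (m1.mul m2).aestronglyMeasurable).2 ?_
  have hi : IndepFun (fun ω => f ω ^ 2) (fun ω => x (k + 1) j ω ^ 2) P :=
    (h.ind1 k f hf j).comp (φ := fun t : ℝ => t ^ 2) (ψ := fun t : ℝ => t ^ 2)
      (by fun_prop) (by fun_prop)
  have := hi.integrable_mul hf2.integrable_sq (h.l2 (k + 1) j).integrable_sq
  refine this.congr (ae_of_all _ fun ω => ?_)
  simp [mul_pow]

lemma D_l2 (h : Hyp P F x v) (k : ℕ) : MemLp (D x k) 2 P := by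
  unfold D
  exact memLp_finsetSum _ fun j _ => prod_l2 h k _ (S_meas h k j) (S_l2 h k j) j

lemma Q_l2 (h : Hyp P F x v) (k : ℕ) : MemLp (Q x k) 2 P := by
  induction k with
  | zero => exact memLp_const 0
  | succ k ih => exact ih.add ((D_l2 h k).const_mul 2)

/-- orthogonality of increments with respect to the past -/
lemma int_mul_x (h : Hyp P F x v) (k : ℕ) (f : Ω → ℝ) (hf : Measurable[F k] f) (j : Fin d) :
    ∫ ω, f ω * x (k + 1) j ω ∂P = 0 := by
  rw [(h.ind1 k f hf j).integral_fun_mul_eq_mul_integral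
    (hf.mono (F.le k) le_rfl).aestronglyMeasurable (h.l2 _ j).aestronglyMeasurable, h.mean, mul_zero]

lemma integrable_mul_x (h : Hyp P F x v) (k : ℕ) (f : Ω → ℝ) (hf : Measurable[F k] f)
    (hf1 : Integrable f P) (j : Fin d) : Integrable (fun ω => f ω * x (k + 1) j ω) P :=
  (h.ind1 k f hf j).integrable_mul hf1 ((h.l2 _ j).integrable (by norm_num))

lemma int_mul_D (h : Hyp P F x v) (k : ℕ) (f : Ω → ℝ) (hf : Measurable[F k] f)
    (hf2 : MemLp f 2 P) : ∫ ω, f ω * D x k ω ∂P = 0 := by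
  have e : ∀ ω, f ω * D x k ω = ∑ j, (f ω * S x k j ω) * x (k + 1) j ω := fun ω => by
    simp only [D, Finset.mul_sum, mul_assoc]
  have hm : ∀ j, Measurable[F k] (fun ω => f ω * S x k j ω) := fun j =>
    Measurable.mul hf (S_meas h k j)
  simp_rw [e]
  rw [integral_finsetSum]
  · exact Finset.sum_eq_zero fun j _ => int_mul_x h k _ (hm j) j
  · intro j _
    exact integrable_mul_x h k _ (hm j) (hf2.integrable_mul (S_l2 h k j)) j

lemma cross_S (h : Hyp P F x v) (k : ℕ) (j : Fin d) :
    ∫ ω, S x k j ω * S x k j ω ∂P = k * v j := by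
  induction k with
  | zero => simp [S_zero]
  | succ k ih =>
    have e : ∀ ω, S x (k + 1) j ω * S x (k + 1) j ω =
        S x k j ω * S x k j ω + (2 * (S x k j ω * x (k + 1) j ω) +
          x (k + 1) j ω * x (k + 1) j ω) := fun ω => by
      rw [S_succ]; ring
    have i1 : Integrable (fun ω => S x k j ω * S x k j ω) P :=
      (S_l2 h k j).integrable_mul (S_l2 h k j)
    have i2 : Integrable (fun ω => 2 * (S x k j ω * x (k + 1) j ω)) P :=
      ((S_l2 h k j).integrable_mul (h.l2 (k + 1) j)).const_mul 2
    have i3 : Integrable (fun ω => x (k + 1) j ω * x (k + 1) j ω) P :=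
      (h.l2 (k + 1) j).integrable_mul (h.l2 (k + 1) j)
    have i23 : Integrable (fun ω => 2 * (S x k j ω * x (k + 1) j ω) +
        x (k + 1) j ω * x (k + 1) j ω) P := i2.add i3
    simp_rw [e]
    rw [integral_add i1 i23, integral_add i2 i3, ih, integral_const_mul, h.cov,
      int_mul_x h k _ (S_meas h k j) j]
    push_cast
    simp
    ring

lemma int_D_sq (h : Hyp P F x v) (k : ℕ) :
    ∫ ω, D x k ω ^ 2 ∂P = k * ∑ j, v j ^ 2 := by
  have e : ∀ ω, D x k ω ^ 2 = ∑ j, ∑ l, (S x k j ω * S x k l ω) *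
      (x (k + 1) j ω * x (k + 1) l ω) := fun ω => by
    rw [sq, D, Finset.sum_mul_sum]
    exact Finset.sum_congr rfl fun j _ => Finset.sum_congr rfl fun l _ => by ring
  have hm : ∀ j l, Measurable[F k] (fun ω => S x k j ω * S x k l ω) := fun j l =>
    Measurable.mul (S_meas h k j) (S_meas h k l)
  have hI : ∀ j l, Integrable (fun ω => (S x k j ω * S x k l ω) *
      (x (k + 1) j ω * x (k + 1) l ω)) P := fun j l =>
    (h.ind2 k _ (hm j l) j l).integrable_mul
      ((S_l2 h k j).integrable_mul (S_l2 h k l)) ((h.l2 _ j).integrable_mul (h.l2 _ l))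
  simp_rw [e]
  rw [integral_finsetSum _ fun j _ => integrable_finsetSum _ fun l _ => hI j l, Finset.mul_sum]
  refine Finset.sum_congr rfl fun j _ => ?_
  rw [integral_finsetSum _ fun l _ => hI j l]
  have : ∀ l, ∫ ω, (S x k j ω * S x k l ω) * (x (k + 1) j ω * x (k + 1) l ω) ∂P =
      if j = l then k * v j ^ 2 else 0 := fun l => by
    rw [(h.ind2 k _ (hm j l) j l).integral_fun_mul_eq_mul_integral
      ((hm j l).mono (F.le k) le_rfl).aestronglyMeasurable
      ((h.l2 _ j).integrable_mul (h.l2 _ l)).aestronglyMeasurable, h.cov]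
    split_ifs with hjl
    · subst hjl
      rw [cross_S h]; ring
    · simp
  simp [this]

lemma int_Q_sq (h : Hyp P F x v) (k : ℕ) :
    ∫ ω, Q x k ω ^ 2 ∂P = 2 * k * ((k : ℝ) - 1) * ∑ j, v j ^ 2 := by
  induction k with
  | zero => simp [Q]
  | succ k ih =>
    have e : ∀ ω, Q x (k + 1) ω ^ 2 =
        Q x k ω ^ 2 + (4 * (Q x k ω * D x k ω) + 4 * D x k ω ^ 2) := fun ω => by
      simp only [Q]; ring
    have i1 := (Q_l2 h k).integrable_sq
    have i2 : Integrable (fun ω => 4 * (Q x k ω * D x k ω)) P :=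
      ((Q_l2 h k).integrable_mul (D_l2 h k)).const_mul 4
    have i3 := (D_l2 h k).integrable_sq.const_mul 4
    have i23 : Integrable (fun ω => 4 * (Q x k ω * D x k ω) + 4 * D x k ω ^ 2) P := i2.add i3
    simp_rw [e]
    rw [integral_add i1 i23, integral_add i2 i3, ih, integral_const_mul,
      integral_const_mul, int_D_sq h, int_mul_D h k _ (Q_meas h k) (Q_l2 h k)]
    push_cast
    ring

lemma submart (h : Hyp P F x v) : Submartingale (fun k ω => Q x k ω ^ 2) F P := by
  refine submartingale_of_setIntegral_le_succ
    (fun k => ((Q_meas h k).pow_const 2).stronglyMeasurable)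
    (fun k => (Q_l2 h k).integrable_sq) fun k s hs => ?_
  have hs' : MeasurableSet s := F.le k s hs
  have i1 := (Q_l2 h k).integrable_sq
  have i2 : Integrable (fun ω => 4 * (Q x k ω * D x k ω)) P :=
    ((Q_l2 h k).integrable_mul (D_l2 h k)).const_mul 4
  have z : ∫ ω in s, 4 * (Q x k ω * D x k ω) ∂P = 0 := by
    have := int_mul_D h k (s.indicator (Q x k)) ((Q_meas h k).indicator hs)
      ((Q_l2 h k).indicator hs')
    rw [integral_const_mul, ← integral_indicator hs']
    have e : s.indicator (fun ω => Q x k ω * D x k ω) =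
        fun ω => s.indicator (Q x k) ω * D x k ω := by
      ext ω
      by_cases hω : ω ∈ s <;> simp [hω]
    rw [e, this, mul_zero]
  calc ∫ ω in s, Q x k ω ^ 2 ∂P
      = ∫ ω in s, (Q x k ω ^ 2 + 4 * (Q x k ω * D x k ω)) ∂P := by
        rw [integral_add i1.integrableOn i2.integrableOn, z, add_zero]
    _ ≤ ∫ ω in s, Q x (k + 1) ω ^ 2 ∂P := by
        refine setIntegral_mono (i1.add i2).integrableOn
          (Q_l2 h (k + 1)).integrable_sq.integrableOn fun ω => ?_
        simp only [Q]
        nlinarith [sq_nonneg (D x k ω)]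

lemma maxineq (h : Hyp P F x v) (N : ℕ) (hN : 1 ≤ N) (lam : ℝ) (hlam : 0 < lam) :
    (P {ω | lam ≤ (Finset.Icc 1 N).sup' (Finset.nonempty_Icc.mpr hN)
      fun k => |Q x k ω|}).toReal ≤ (lam ^ 2)⁻¹ * ∫ ω, Q x N ω ^ 2 ∂P := by
  have hε : (0 : ℝ) < lam ^ 2 := by positivity
  have key := maximal_ineq (submart h) (fun k ω => sq_nonneg (Q x k ω))
    (ε := ⟨lam ^ 2, hε.le⟩) N
  set A := {ω | ((⟨lam ^ 2, hε.le⟩ : NNReal) : ℝ) ≤ (Finset.range (N + 1)).sup'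
    Finset.nonempty_range_add_one fun k => Q x k ω ^ 2} with hA
  have sub : {ω | lam ≤ (Finset.Icc 1 N).sup' (Finset.nonempty_Icc.mpr hN)
      fun k => |Q x k ω|} ⊆ A := by
    intro ω hω
    simp only [Set.mem_ofPred_eq, Finset.le_sup'_iff] at hω
    obtain ⟨k, hk, hk2⟩ := hω
    simp only [hA, Set.mem_ofPred_eq, Finset.le_sup'_iff]
    refine ⟨k, ?_, ?_⟩
    · simp only [Finset.mem_Icc] at hk
      simp only [Finset.mem_range]; omega
    · change lam ^ 2 ≤ _
      rw [← sq_abs (Q x k ω)]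
      gcongr
  have h2 := ENNReal.toReal_mono ENNReal.ofReal_ne_top key
  rw [ENNReal.toReal_mul, ENNReal.toReal_ofReal
    (integral_nonneg fun ω => sq_nonneg _)] at h2
  change lam ^ 2 * (P A).toReal ≤ _ at h2
  have h3 : ∫ ω in A, Q x N ω ^ 2 ∂P ≤ ∫ ω, Q x N ω ^ 2 ∂P :=
    setIntegral_le_integral (Q_l2 h N).integrable_sq (ae_of_all _ fun ω => sq_nonneg _)
  have h4 := ENNReal.toReal_mono (measure_ne_top P A) (measure_mono sub)
  refine h4.trans ?_
  rw [inv_mul_eq_div, le_div_iff₀ hε, mul_comm]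
  exact h2.trans h3

lemma Q_eq (X : ℕ → Ω → EuclideanSpace ℝ (Fin d)) (k : ℕ) (ω : Ω) :
    (∑ l ∈ Finset.Icc 1 k, ∑ k' ∈ Finset.Icc 1 k,
      if l ≠ k' then ⟪X l ω, X k' ω⟫ else 0) = Q (fun i j ω => X i ω j) k ω := by
  induction k with
  | zero => simp [Q]
  | succ k ih =>
    have a1 : ∀ l ∈ Finset.Icc 1 k, (if l ≠ k + 1 then ⟪X l ω, X (k + 1) ω⟫ else 0) =
        ⟪X l ω, X (k + 1) ω⟫ := fun l hl => by
      rw [if_pos]; have := (Finset.mem_Icc.mp hl).2; omega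
    have a2 : ∀ l ∈ Finset.Icc 1 k, (if k + 1 ≠ l then ⟪X (k + 1) ω, X l ω⟫ else 0) =
        ⟪X l ω, X (k + 1) ω⟫ := fun l hl => by
      rw [if_pos, real_inner_comm]; have := (Finset.mem_Icc.mp hl).2; omega
    have hD : D (fun i j ω => X i ω j) k ω = ∑ l ∈ Finset.Icc 1 k, ⟪X l ω, X (k + 1) ω⟫ := by
      simp only [D, S, Finset.sum_mul]
      rw [Finset.sum_comm]
      refine Finset.sum_congr rfl fun l _ => ?_
      simp [PiLp.inner_apply, mul_comm]
    rw [Finset.sum_Icc_succ_top (by omega)]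
    simp_rw [Finset.sum_Icc_succ_top (show 1 ≤ k + 1 by omega)]
    rw [Finset.sum_add_distrib, ih, Finset.sum_congr rfl a1, Finset.sum_congr rfl a2]
    simp only [Q, hD]
    simp
    ring

end QMax

/-- Doob-type maximal inequality for `Q_{1,k} = Σ_{1≤l≠k'≤k} ⟨X_l, X_{k'}⟩`.
Under conditions (a) and (b), for `N ≥ 1` and `λ > 0`,
`P(max_{1≤k≤N} |Q_{1,k}| ≥ λ) ≤ λ⁻² E(Q_{1,N})² ≤ 2 λ⁻² N(N−1) max_{1≤j≤d} E(X_{1,j})²`. -/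
theorem Q_maximal_inequality
    {Ω : Type*} [MeasurableSpace Ω] (P : Measure Ω) [IsProbabilityMeasure P]
    (d : ℕ) (X : ℕ → Ω → EuclideanSpace ℝ (Fin d))
    (hmeas : ∀ i, Measurable (X i))
    (hindep : ProbabilityTheory.iIndepFun X P)
    (hident : ∀ i, Measure.map (X i) P = Measure.map (X 1) P)
    (hL2 : ∀ i, MemLp (X i) 2 P)
    -- (a): centred and normalized
    (ha1 : ∫ ω, X 1 ω ∂P = 0)
    (ha2 : ∫ ω, ‖X 1 ω‖ ^ 2 ∂P = 1)
    -- (b): uncorrelated components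
    (hb : ∀ j k : Fin d, j ≠ k → ∫ ω, (X 1 ω j) * (X 1 ω k) ∂P = 0)
    (N : ℕ) (hN : 1 ≤ N) (lam : ℝ) (hlam : 0 < lam) :
    ((P {ω | lam ≤ (Finset.Icc 1 N).sup' (Finset.nonempty_Icc.mpr hN) fun k =>
          |∑ l ∈ Finset.Icc 1 k, ∑ k' ∈ Finset.Icc 1 k,
            if l ≠ k' then ⟪X l ω, X k' ω⟫ else 0|}).toReal
        ≤ (lam ^ 2)⁻¹ * ∫ ω, (∑ l ∈ Finset.Icc 1 N, ∑ k' ∈ Finset.Icc 1 N,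
            if l ≠ k' then ⟪X l ω, X k' ω⟫ else 0) ^ 2 ∂P) ∧
    ((lam ^ 2)⁻¹ * (∫ ω, (∑ l ∈ Finset.Icc 1 N, ∑ k' ∈ Finset.Icc 1 N,
            if l ≠ k' then ⟪X l ω, X k' ω⟫ else 0) ^ 2 ∂P)
        ≤ 2 * (lam ^ 2)⁻¹ * N * ((N : ℝ) - 1) *
            ⨆ j : Fin d, ∫ ω, (X 1 ω j) ^ 2 ∂P) := by
  have hsm : ∀ i, StronglyMeasurable (X i) := fun i => (hmeas i).stronglyMeasurable
  have hcoord : ∀ j : Fin d, Measurable fun y : EuclideanSpace ℝ (Fin d) => y j := fun j => by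
    fun_prop
  have tr : ∀ (i : ℕ) (g : EuclideanSpace ℝ (Fin d) → ℝ), Measurable g →
      ∫ ω, g (X i ω) ∂P = ∫ ω, g (X 1 ω) ∂P := fun i g hg => by
    rw [← integral_map (hmeas i).aemeasurable hg.aestronglyMeasurable, hident i,
      integral_map (hmeas 1).aemeasurable hg.aestronglyMeasurable]
  have ind : ∀ k (f : Ω → ℝ), Measurable[Filtration.natural X hsm k] f →
      ∀ g : EuclideanSpace ℝ (Fin d) → ℝ, Measurable g →
      ProbabilityTheory.IndepFun f (fun ω => g (X (k + 1) ω)) P := fun k f hf g hg => by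
    have h1 := (hindep.indep_comap_natural_of_lt hsm (Nat.lt_succ_self k)).symm
    rw [ProbabilityTheory.IndepFun_iff_Indep]
    refine ProbabilityTheory.indep_of_indep_of_le_left
      (ProbabilityTheory.indep_of_indep_of_le_right h1 ?_) hf.comap_le
    exact (hg.comp (comap_measurable (X (k + 1)))).comap_le
  have hyp : QMax.Hyp P (Filtration.natural X hsm) (fun i j ω => X i ω j)
      (fun j => ∫ ω, (X 1 ω j) ^ 2 ∂P) :=
    { adp := fun i j => (hcoord j).comp
        (Filtration.stronglyAdapted_natural hsm i).measurable
      l2 := fun i j => (hL2 i).eval_piLp j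
      ind1 := fun k f hf j => ind k f hf _ (hcoord j)
      ind2 := fun k f hf j l => ind k f hf _ ((hcoord j).mul (hcoord l))
      mean := fun i j => by
        rw [tr i _ (hcoord j), ← eval_integral_piLp
          (fun j => ((hL2 1).eval_piLp j).integrable (by norm_num)), ha1]
        rfl
      cov := fun i j l => by
        rw [tr i (fun y => y j * y l) ((hcoord j).mul (hcoord l))]
        split_ifs with hjl
        · subst hjl
          simp only [sq]
        · exact hb j l hjl }
  have hsum : ∑ j, ∫ ω, (X 1 ω j) ^ 2 ∂P = 1 := by
    rw [← integral_finsetSum _ fun j _ => ((hL2 1).eval_piLp j).integrable_sq, ← ha2]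
    simp [EuclideanSpace.norm_sq_eq]
  simp_rw [QMax.Q_eq]
  refine ⟨QMax.maxineq hyp N hN lam hlam, ?_⟩
  rw [QMax.int_Q_sq hyp]
  have hle : ∑ j, (∫ ω, (X 1 ω j) ^ 2 ∂P) ^ 2 ≤ ⨆ j : Fin d, ∫ ω, (X 1 ω j) ^ 2 ∂P := by
    calc ∑ j, (∫ ω, (X 1 ω j) ^ 2 ∂P) ^ 2
        ≤ ∑ j, (⨆ j : Fin d, ∫ ω, (X 1 ω j) ^ 2 ∂P) * ∫ ω, (X 1 ω j) ^ 2 ∂P := by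
          refine Finset.sum_le_sum fun j _ => ?_
          rw [sq]
          exact mul_le_mul_of_nonneg_right
            (le_ciSup (f := fun j : Fin d => ∫ ω, (X 1 ω j) ^ 2 ∂P)
              (Set.finite_range _).bddAbove j)
            (integral_nonneg fun ω => sq_nonneg _)
      _ = _ := by rw [← Finset.mul_sum, hsum, mul_one]
  have hN1 : (0 : ℝ) ≤ (N : ℝ) - 1 := by
    have : (1 : ℝ) ≤ N := by exact_mod_cast hN
    linarith
  calc _ = 2 * (lam ^ 2)⁻¹ * N * ((N : ℝ) - 1) * ∑ j, (∫ ω, (X 1 ω j) ^ 2 ∂P) ^ 2 := by ring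
    _ ≤ _ := mul_le_mul_of_nonneg_left hle (by positivity)
end

section
/- Let X_1, …, X_n be i.i.d. random vectors in ℝ^d, let s > 0, a > 0, ε > 0, and set Y_j := X_j 𝟙_{‖X_j‖² ≤ sa}. Then P( max_{1≤k≤n} ‖ Σ_{j=1}^{k} (Y_j − E Y_j) − (k/n) Σ_{j=1}^{n} (Y_j − E Y_j) ‖ ≥ 2^{-1} ε √a ) ≤ 64 ε^{-2} a^{-1} n E( ‖X_1‖² 𝟙_{‖X_1‖² ≤ sa} ). -/
open MeasureTheory

/-- Doob's maximal inequality for a walk with bounded, centred, independent steps. -/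
lemma walk_maximal_aux {Ω : Type*} [MeasurableSpace Ω] (P : Measure Ω) [IsProbabilityMeasure P]
    (d : ℕ) (Z : ℕ → Ω → EuclideanSpace ℝ (Fin d)) (hZ : ∀ i, StronglyMeasurable (Z i))
    (hind : ProbabilityTheory.iIndepFun Z P) (C : ℝ) (hC : ∀ i ω, ‖Z i ω‖ ≤ C)
    (h0 : ∀ i, ∫ ω, Z i ω ∂P = 0) (V : ℝ) (hV : ∀ i, ∫ ω, ‖Z i ω‖ ^ 2 ∂P ≤ V)
    (n : ℕ) (c : ℝ) (hc : 0 < c) :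
    c * P.real {ω | ∃ k ≤ n, c ≤ ‖∑ j ∈ Finset.Icc 1 k, Z j ω‖ ^ 2} ≤ n * V := by
  set S : ℕ → Ω → EuclideanSpace ℝ (Fin d) := fun k ω => ∑ j ∈ Finset.Icc 1 k, Z j ω with hS
  let 𝒢 := Filtration.natural Z hZ
  have hZint : ∀ i, Integrable (Z i) P := fun i =>
    Integrable.of_bound (hZ i).aestronglyMeasurable C (ae_of_all _ (hC i))
  have hSad : ∀ k, StronglyMeasurable[𝒢 k] (S k) := by
    intro k
    refine Finset.stronglyMeasurable_fun_sum _ fun j hj => ?_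
    exact ((Filtration.stronglyAdapted_natural hZ) j).mono (𝒢.mono (Finset.mem_Icc.1 hj).2)
  have hSm : ∀ k, StronglyMeasurable (S k) := fun k => (hSad k).mono (𝒢.le k)
  have hSb : ∀ k ω, ‖S k ω‖ ≤ k * C := by
    intro k ω
    refine (norm_sum_le _ _).trans ((Finset.sum_le_sum fun j _ => hC j ω).trans ?_)
    simp
  have hSsucc : ∀ k ω, S (k + 1) ω = S k ω + Z (k + 1) ω := by
    intro k ω
    simp only [hS]
    rw [Finset.sum_Icc_succ_top (by omega)]
  have hsqS : ∀ k, Integrable (fun ω => ‖S k ω‖ ^ 2) P := fun k =>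
    Integrable.of_bound ((hSm k).norm.pow 2).aestronglyMeasurable ((k * C) ^ 2)
      (ae_of_all _ fun ω => by
        rw [norm_pow, norm_norm]
        exact pow_le_pow_left₀ (norm_nonneg _) (hSb k ω) 2)
  have hsqZ : ∀ k, Integrable (fun ω => ‖Z k ω‖ ^ 2) P := fun k =>
    Integrable.of_bound ((hZ k).norm.pow 2).aestronglyMeasurable (C ^ 2)
      (ae_of_all _ fun ω => by
        rw [norm_pow, norm_norm]
        exact pow_le_pow_left₀ (norm_nonneg _) (hC k ω) 2)
  have hin : ∀ k, Integrable (fun ω => inner ℝ (S k ω) (Z (k + 1) ω)) P := fun k =>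
    Integrable.of_bound ((hSm k).inner (hZ (k + 1))).aestronglyMeasurable (k * C * C)
      (ae_of_all _ fun ω => (norm_inner_le_norm _ _).trans
        (mul_le_mul (hSb k ω) (hC _ ω) (norm_nonneg _) ((norm_nonneg _).trans (hSb k ω))))
  have hce : ∀ k, P[fun ω => inner ℝ (S k ω) (Z (k + 1) ω) | 𝒢 k] =ᵐ[P] 0 := by
    intro k
    have h1 := condExp_bilin_of_stronglyMeasurable_left (μ := P) (innerSL ℝ) (hSad k)
      (g := Z (k + 1)) (hin k) (hZint (k + 1))
    have h2 := ProbabilityTheory.iIndepFun.condExp_natural_ae_eq_of_lt hZ hind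
      (Nat.lt_succ_self k)
    filter_upwards [h1, h2] with ω e1 e2
    refine e1.trans ?_
    rw [e2, h0]
    simp
  have hin0 : ∀ k, ∫ ω, inner ℝ (S k ω) (Z (k + 1) ω) ∂P = 0 := by
    intro k
    rw [← integral_condExp (𝒢.le k), integral_congr_ae (hce k)]
    simp
  have hexp : ∀ k ω, ‖S (k + 1) ω‖ ^ 2
      = ‖S k ω‖ ^ 2 + 2 * inner ℝ (S k ω) (Z (k + 1) ω) + ‖Z (k + 1) ω‖ ^ 2 := by
    intro k ω
    rw [hSsucc, norm_add_sq_real]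
  have hmom : ∀ k : ℕ, ∫ ω, ‖S k ω‖ ^ 2 ∂P ≤ k * V := by
    intro k
    induction k with
    | zero => simp [hS]
    | succ k ih =>
      simp_rw [hexp]
      have hadd : Integrable
          (fun ω => ‖S k ω‖ ^ 2 + 2 * inner ℝ (S k ω) (Z (k + 1) ω)) P :=
        (hsqS k).add ((hin k).const_mul 2)
      rw [integral_add hadd (hsqZ _),
        integral_add (hsqS k) ((hin k).const_mul 2), integral_const_mul, hin0]
      have := hV (k + 1)
      push_cast
      linarith
  have hsub : Submartingale (fun k ω => ‖S k ω‖ ^ 2) 𝒢 P := by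
    refine submartingale_of_condExp_sub_nonneg_nat (fun k => (hSad k).norm.pow 2) hsqS fun k => ?_
    have e : ((fun ω => ‖S (k + 1) ω‖ ^ 2) - fun ω => ‖S k ω‖ ^ 2)
        = (2 : ℝ) • (fun ω => inner ℝ (S k ω) (Z (k + 1) ω)) + fun ω => ‖Z (k + 1) ω‖ ^ 2 := by
      ext ω
      simp only [Pi.sub_apply, Pi.add_apply, Pi.smul_apply, smul_eq_mul, hexp]
      ring
    have h1 := condExp_add (m := 𝒢 k) ((hin k).smul (2 : ℝ)) (hsqZ (k + 1))
    have h2 := condExp_smul (m := 𝒢 k) (μ := P) (2 : ℝ)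
      (fun ω => inner ℝ (S k ω) (Z (k + 1) ω))
    have h3 : 0 ≤ᵐ[P] P[fun ω => ‖Z (k + 1) ω‖ ^ 2 | 𝒢 k] :=
      condExp_nonneg (ae_of_all _ fun ω => by positivity)
    show 0 ≤ᵐ[P] P[((fun ω => ‖S (k + 1) ω‖ ^ 2) - fun ω => ‖S k ω‖ ^ 2) | 𝒢 k]
    rw [e]
    filter_upwards [h1, h2, h3, hce k] with ω e1 e2 e3 e4
    rw [e1, Pi.add_apply, e2, Pi.smul_apply, e4]
    simpa using e3
  lift c to NNReal using hc.le
  have hmax := maximal_ineq hsub (fun k ω => by positivity) (ε := c) n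
  have hset : {ω | (c : ℝ) ≤ (Finset.range (n + 1)).sup'
      Finset.nonempty_range_add_one fun k => ‖S k ω‖ ^ 2} = {ω | ∃ k ≤ n, c ≤ ‖S k ω‖ ^ 2} := by
    ext ω
    simp [Finset.le_sup'_iff]
  rw [hset] at hmax
  have h5 := ENNReal.toReal_mono ENNReal.ofReal_ne_top hmax
  rw [ENNReal.toReal_mul, ENNReal.toReal_ofReal (integral_nonneg fun ω => by positivity)] at h5
  calc (c : ℝ) * P.real {ω | ∃ k ≤ n, (c : ℝ) ≤ ‖S k ω‖ ^ 2}
      ≤ ∫ ω in {ω | ∃ k ≤ n, (c : ℝ) ≤ ‖S k ω‖ ^ 2}, ‖S n ω‖ ^ 2 ∂P := h5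
    _ ≤ ∫ ω, ‖S n ω‖ ^ 2 ∂P :=
      setIntegral_le_integral (hsqS n) (ae_of_all _ fun ω => by positivity)
    _ ≤ n * V := hmom n

/-- Doob-type bound for the bridge of the centred truncated random walk.
For i.i.d. random vectors `X_1, …, X_n` in `ℝ^d`, `s, a, ε > 0` and the truncations
`Y_j = X_j 𝟙_{‖X_j‖² ≤ sa}`,
`P(max_{1≤k≤n} ‖Σ_{j≤k}(Y_j − EY_j) − (k/n)Σ_{j≤n}(Y_j − EY_j)‖ ≥ 2⁻¹ε√a)
  ≤ 64 ε⁻² a⁻¹ n E(‖X_1‖² 𝟙_{‖X_1‖² ≤ sa})`. -/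
theorem truncated_bridge_maximal_inequality
    {Ω : Type*} [MeasurableSpace Ω] (P : Measure Ω) [IsProbabilityMeasure P]
    (d n : ℕ) (hn : 1 ≤ n)
    (X : ℕ → Ω → EuclideanSpace ℝ (Fin d))
    (hmeas : ∀ i, Measurable (X i))
    (hindep : ProbabilityTheory.iIndepFun X P)
    (hident : ∀ i, Measure.map (X i) P = Measure.map (X 1) P)
    (s a ε : ℝ) (hs : 0 < s) (ha : 0 < a) (hε : 0 < ε) :
    (P {ω | 2⁻¹ * ε * Real.sqrt a ≤
        (Finset.Icc 1 n).sup' (Finset.nonempty_Icc.mpr hn) fun k =>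
          ‖(∑ j ∈ Finset.Icc 1 k,
              ((if ‖X j ω‖ ^ 2 ≤ s * a then X j ω else 0)
                - ∫ ω', (if ‖X j ω'‖ ^ 2 ≤ s * a then X j ω' else 0) ∂P))
            - ((k : ℝ) / (n : ℝ)) • (∑ j ∈ Finset.Icc 1 n,
              ((if ‖X j ω‖ ^ 2 ≤ s * a then X j ω else 0)
                - ∫ ω', (if ‖X j ω'‖ ^ 2 ≤ s * a then X j ω' else 0) ∂P))‖}).toReal
      ≤ 64 * (ε ^ 2)⁻¹ * a⁻¹ * n *
          ∫ ω, (if ‖X 1 ω‖ ^ 2 ≤ s * a then ‖X 1 ω‖ ^ 2 else 0) ∂P := by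
  classical
  set T : EuclideanSpace ℝ (Fin d) → EuclideanSpace ℝ (Fin d) :=
    fun x => if ‖x‖ ^ 2 ≤ s * a then x else 0 with hT
  have hTm : Measurable T :=
    Measurable.ite (measurableSet_le (by fun_prop) measurable_const) measurable_id measurable_const
  have hTb : ∀ x, ‖T x‖ ≤ Real.sqrt (s * a) := by
    intro x
    simp only [hT]
    split_ifs with h
    · exact Real.le_sqrt_of_sq_le h
    · simp
  have hmean : ∀ i, ∫ ω, T (X i ω) ∂P = ∫ x, T x ∂(Measure.map (X 1) P) := by
    intro i
    rw [← hident i, integral_map (hmeas i).aemeasurable hTm.aestronglyMeasurable]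
  set m := ∫ x, T x ∂(Measure.map (X 1) P) with hm
  let Z : ℕ → Ω → EuclideanSpace ℝ (Fin d) := fun j ω => T (X j ω) - m
  have hYm : ∀ i, Measurable fun ω => T (X i ω) := fun i => hTm.comp (hmeas i)
  have hYint : ∀ i, Integrable (fun ω => T (X i ω)) P := fun i =>
    Integrable.of_bound (hYm i).aestronglyMeasurable _ (ae_of_all _ fun ω => hTb _)
  have hYsq : ∀ i, Integrable (fun ω => ‖T (X i ω)‖ ^ 2) P := fun i =>
    Integrable.of_bound ((hYm i).norm.pow_const 2).aestronglyMeasurable (Real.sqrt (s * a) ^ 2)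
      (ae_of_all _ fun ω => by
        rw [norm_pow, norm_norm]
        exact pow_le_pow_left₀ (norm_nonneg _) (hTb _) 2)
  have hZm : ∀ i, StronglyMeasurable (Z i) := fun i =>
    ((hYm i).sub measurable_const).stronglyMeasurable
  have hZind : ProbabilityTheory.iIndepFun Z P :=
    hindep.comp (fun _ x => T x - m) (fun _ => hTm.sub measurable_const)
  have hZ0 : ∀ i, ∫ ω, Z i ω ∂P = 0 := by
    intro i
    show ∫ ω, (T (X i ω) - m) ∂P = 0
    rw [integral_sub (hYint i) (integrable_const _), hmean]
    simp
  set V := ∫ ω, (if ‖X 1 ω‖ ^ 2 ≤ s * a then ‖X 1 ω‖ ^ 2 else 0) ∂P with hVdef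
  have hV0 : 0 ≤ V := integral_nonneg fun ω => by
    show 0 ≤ (if ‖X 1 ω‖ ^ 2 ≤ s * a then ‖X 1 ω‖ ^ 2 else 0)
    split_ifs <;> positivity
  have hYV : ∀ i, ∫ ω, ‖T (X i ω)‖ ^ 2 ∂P = V := by
    intro i
    have hm2 : AEStronglyMeasurable (fun x => ‖T x‖ ^ 2) (Measure.map (X 1) P) :=
      (hTm.norm.pow_const 2).aestronglyMeasurable
    have e1 : ∫ ω, ‖T (X i ω)‖ ^ 2 ∂P = ∫ x, ‖T x‖ ^ 2 ∂(Measure.map (X i) P) :=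
      (integral_map (hmeas i).aemeasurable (by rw [hident i]; exact hm2)).symm
    rw [e1, hident i, integral_map (hmeas 1).aemeasurable hm2, hVdef]
    refine integral_congr_ae (ae_of_all _ fun ω => ?_)
    simp only [hT]
    split_ifs <;> simp
  have hZV : ∀ i, ∫ ω, ‖Z i ω‖ ^ 2 ∂P ≤ V := by
    intro i
    have e : ∀ ω, ‖Z i ω‖ ^ 2 = ‖T (X i ω)‖ ^ 2 - 2 * inner ℝ m (T (X i ω)) + ‖m‖ ^ 2 := by
      intro ω
      show ‖T (X i ω) - m‖ ^ 2 = _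
      rw [norm_sub_sq_real, real_inner_comm]
    have hi : Integrable (fun ω => 2 * inner ℝ m (T (X i ω))) P :=
      ((hYint i).const_inner m).const_mul 2
    simp_rw [e]
    have hsubi : Integrable (fun ω => ‖T (X i ω)‖ ^ 2 - 2 * inner ℝ m (T (X i ω))) P :=
      (hYsq i).sub hi
    rw [integral_add hsubi (integrable_const _), integral_sub (hYsq i) hi,
      integral_const_mul, integral_inner (hYint i), hmean, hYV, real_inner_self_eq_norm_sq]
    simp
    nlinarith [sq_nonneg ‖m‖]
  have hZb : ∀ i ω, ‖Z i ω‖ ≤ Real.sqrt (s * a) + ‖m‖ := fun i ω =>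
    (norm_sub_le _ _).trans (add_le_add_left (hTb _) _)
  have key := walk_maximal_aux P d Z hZm hZind _ hZb hZ0 V hZV n (ε ^ 2 * a / 16) (by positivity)
  have hnpos : (0 : ℝ) < n := by exact_mod_cast hn
  have hsubset : {ω | 2⁻¹ * ε * Real.sqrt a ≤
        (Finset.Icc 1 n).sup' (Finset.nonempty_Icc.mpr hn) fun k =>
          ‖(∑ j ∈ Finset.Icc 1 k, (T (X j ω) - ∫ ω', T (X j ω') ∂P))
            - ((k : ℝ) / (n : ℝ)) • (∑ j ∈ Finset.Icc 1 n,
              (T (X j ω) - ∫ ω', T (X j ω') ∂P))‖}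
      ⊆ {ω | ∃ k ≤ n, ε ^ 2 * a / 16 ≤ ‖∑ j ∈ Finset.Icc 1 k, Z j ω‖ ^ 2} := by
    intro ω hω
    rw [Set.mem_ofPred_eq, Finset.le_sup'_iff] at hω
    obtain ⟨k, hk, hle⟩ := hω
    have hkn := (Finset.mem_Icc.1 hk).2
    simp_rw [hmean] at hle
    change 2⁻¹ * ε * Real.sqrt a ≤ ‖(∑ j ∈ Finset.Icc 1 k, Z j ω)
      - ((k : ℝ) / (n : ℝ)) • (∑ j ∈ Finset.Icc 1 n, Z j ω)‖ at hle
    have hfrac : ‖((k : ℝ) / (n : ℝ)) • (∑ j ∈ Finset.Icc 1 n, Z j ω)‖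
        ≤ ‖∑ j ∈ Finset.Icc 1 n, Z j ω‖ := by
      rw [norm_smul, Real.norm_of_nonneg (by positivity)]
      refine mul_le_of_le_one_left (norm_nonneg _) ?_
      rw [div_le_one hnpos]
      exact_mod_cast hkn
    have hle2 := hle.trans (norm_sub_le _ _)
    have hsq : ε ^ 2 * a / 16 = (ε * Real.sqrt a / 4) ^ 2 := by
      rw [div_pow, mul_pow, Real.sq_sqrt ha.le]; norm_num
    have hp : 0 ≤ ε * Real.sqrt a / 4 := by positivity
    rw [Set.mem_ofPred_eq, hsq]
    rcases le_total (ε * Real.sqrt a / 4) ‖∑ j ∈ Finset.Icc 1 k, Z j ω‖ with h | h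
    · exact ⟨k, hkn, pow_le_pow_left₀ hp h 2⟩
    · exact ⟨n, le_rfl, pow_le_pow_left₀ hp (by linarith) 2⟩
  have hmono := measureReal_mono (μ := P) hsubset
  refine hmono.trans ?_
  have h16 : P.real {ω | ∃ k ≤ n, ε ^ 2 * a / 16 ≤ ‖∑ j ∈ Finset.Icc 1 k, Z j ω‖ ^ 2}
      ≤ (n * V) / (ε ^ 2 * a / 16) := by
    rw [le_div_iff₀ (by positivity), mul_comm]
    exact key
  refine h16.trans ?_
  have e : (n * V) / (ε ^ 2 * a / 16) = 16 * (ε ^ 2)⁻¹ * a⁻¹ * n * V := by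
    field_simp
  rw [e]
  gcongr
  norm_num
end
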